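/- Let M = c + εD ∈ 𝔻ℍ[t] be a bounded monic reduced translational motion polynomial of degree n with c ∈ ℝ[t], D ∈ ℍ[t], and ν(M) = c² = Nⁿ for some monic irreducible quadratic N ∈ ℝ[t]. If M admits a factorization into monic linear motion polynomial factors, then c divides D·D* in ℝ[t]. -/

import Mathlib

open Polynomial DualNumber TrivSqZeroExt

noncomputable section

/-- The real quaternions. -/
abbrev Hq : Type := Quaternion ℝ

/-- The dual quaternions. -/
abbrev DHq : Type := DualNumber Hq

/-- Conjugation of a dual quaternion: `(p + ε d)* = p* + ε d*`. -/
instance : Star DHq := ⟨fun x => inl (star x.fst) + inr (star x.snd)⟩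

/-- Coefficient-wise (quaternion) conjugation of a polynomial. -/
def cstar {R : Type*} [Semiring R] [Star R] (A : R[X]) : R[X] :=
  A.sum fun n a => Polynomial.C (star a) * Polynomial.X ^ n

/-- The embedding `ℝ[t] → ℍ[t]`. -/
def qPoly (f : ℝ[X]) : Hq[X] := f.map (algebraMap ℝ Hq)

/-- The embedding `ℍ[t] → 𝔻ℍ[t]` (primal part). -/
def dhQ (P : Hq[X]) : DHq[X] := P.map (inlHom Hq Hq)

/-- The embedding `ℝ[t] → 𝔻ℍ[t]`. -/
def dPoly (f : ℝ[X]) : DHq[X] := dhQ (qPoly f)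

/-- The dual quaternion polynomial `P + ε D` with primal part `P` and dual part `D`. -/
def mp (P D : Hq[X]) : DHq[X] := dhQ P + Polynomial.C ε * dhQ D

/-- The primal part of a dual quaternion polynomial. -/
def primal (A : DHq[X]) : Hq[X] := A.map (fstHom ℝ Hq Hq).toRingHom

/-- A motion polynomial: a dual quaternion polynomial whose norm polynomial
`ν(M) = M·M*` is a nonzero real polynomial. -/
def IsMotion (M : DHq[X]) : Prop := ∃ f : ℝ[X], f ≠ 0 ∧ M * cstar M = dPoly f

/-- A real polynomial divides a quaternion polynomial. -/
def RDvdQ (f : ℝ[X]) (A : Hq[X]) : Prop := ∃ B : Hq[X], A = qPoly f * B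

/-- A real polynomial divides a dual quaternion polynomial. -/
def RDvdD (f : ℝ[X]) (A : DHq[X]) : Prop := ∃ B : DHq[X], A = dPoly f * B

/-- `g` is the greatest common monic real polynomial divisor of a quaternion polynomial `A`
(with itself), i.e. `g = mrpf A`. -/
def IsMrpfQ (g : ℝ[X]) (A : Hq[X]) : Prop :=
  g.Monic ∧ RDvdQ g A ∧ ∀ f : ℝ[X], f.Monic → RDvdQ f A → f ∣ g

/-- `g` is the greatest common monic real polynomial divisor of `c ∈ ℝ[t]` and a quaternion
polynomial `A`, i.e. `g = mrpf(c, A)`. -/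
def IsMrpf2 (g : ℝ[X]) (c : ℝ[X]) (A : Hq[X]) : Prop :=
  g.Monic ∧ g ∣ c ∧ RDvdQ g A ∧
    ∀ f : ℝ[X], f.Monic → f ∣ c → RDvdQ f A → f ∣ g

/-- `g` is the greatest common monic real polynomial divisor of `c ∈ ℝ[t]` and two quaternion
polynomials `A` and `B`, i.e. `g = mrpf(c, A, B)`. -/
def IsMrpf3 (g : ℝ[X]) (c : ℝ[X]) (A B : Hq[X]) : Prop :=
  g.Monic ∧ g ∣ c ∧ RDvdQ g A ∧ RDvdQ g B ∧
    ∀ f : ℝ[X], f.Monic → f ∣ c → RDvdQ f A → RDvdQ f B → f ∣ g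

/-- A quaternion polynomial is reduced: `mrpf = 1`, i.e. it has only constant real
polynomial factors. -/
def ReducedQ (A : Hq[X]) : Prop := ∀ f : ℝ[X], f.Monic → RDvdQ f A → f = 1

/-- A dual quaternion polynomial is reduced: `mrpf = 1`. -/
def ReducedD (A : DHq[X]) : Prop := ∀ f : ℝ[X], f.Monic → RDvdD f A → f = 1

/-- Boundedness of a (monic reduced) motion polynomial: `mrpf` of its primal part has
no real root, equivalently no linear real polynomial `t - a` divides the primal part. -/
def BoundedD (M : DHq[X]) : Prop :=
  ∀ a : ℝ, ¬ RDvdQ (Polynomial.X - Polynomial.C a) (primal M)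

/-- A generic motion polynomial: monic, a motion polynomial, with `mrpf` of the primal
part equal to `1`. -/
def GenericD (M : DHq[X]) : Prop :=
  M.Monic ∧ IsMotion M ∧ ReducedQ (primal M)

/-- The monic linear dual quaternion polynomial `t - p - ε d`. -/
def lin (p d : Hq) : DHq[X] := mp (Polynomial.X - Polynomial.C p) (-Polynomial.C d)

/-- `M` admits a factorization into monic linear motion polynomial factors. -/
def HasLinFact (M : DHq[X]) : Prop :=
  ∃ L : List DHq, (∀ h ∈ L, IsMotion (Polynomial.X - Polynomial.C h)) ∧
    M = (L.map fun h => Polynomial.X - Polynomial.C h).prod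

end

/-!
The norm polynomial is multiplicative, so each factor `t - hᵢ` has a monic quadratic norm dividing
`c² = Nⁿ`, and that norm is `N`. Since `c` is itself a power of `N`, the product can be cut in the
middle, `c + ε D = A B` with `ν(B) = c`. Multiplying by `B*` from the right gives
`(c + ε D) B* = c A`, whose dual part shows that `c` divides `D R*`, where `R` is the primal part of
`B`. Since `R* R = R R* = c`, this means `D = E R` for some `E ∈ ℍ[t]`, and so
`D D* = E R R* E* = c E E*`.
-/

theorem exists_eq_pow_of_dvd_pow {R : Type*} [CommRing R] [IsDomain R] {f N : R[X]} {n : ℕ}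
    (hN : N.Monic) (hprime : Prime N) (hf : f.Monic) (h : f ∣ N ^ n) : ∃ k, f = N ^ k := by
  obtain ⟨k, -, hk⟩ := (dvd_prime_pow hprime n).1 h
  exact ⟨k, eq_of_monic_of_associated hf (hN.pow k) hk⟩

section ConjugationAdditive

variable {R : Type*} [Semiring R] [StarAddMonoid R]

theorem coeff_cstar (A : R[X]) (n : ℕ) : (cstar A).coeff n = star (A.coeff n) := by
  simp only [cstar, sum_def, finsetSum_coeff, coeff_C_mul_X_pow]
  rw [Finset.sum_ite_eq]
  split_ifs with hn
  · rfl
  · rw [notMem_support_iff.1 hn, star_zero]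

theorem support_cstar (A : R[X]) : (cstar A).support = A.support := by
  ext n
  simp [coeff_cstar]

theorem natDegree_cstar (A : R[X]) : (cstar A).natDegree = A.natDegree :=
  natDegree_eq_of_degree_eq (congrArg Finset.max (support_cstar A))

end ConjugationAdditive

section Conjugation

variable {R : Type*} [Semiring R] [StarRing R]

theorem cstar_one : cstar (1 : R[X]) = 1 := by
  ext n
  rw [coeff_cstar, coeff_one]
  split_ifs <;> simp

theorem cstar_mul (A B : R[X]) : cstar (A * B) = cstar B * cstar A := by
  ext n
  rw [coeff_cstar, coeff_mul, coeff_mul, star_sum, ← Finset.Nat.sum_antidiagonal_swap]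
  simp [coeff_cstar]

theorem monic_cstar {A : R[X]} (hA : A.Monic) : (cstar A).Monic := by
  rw [Monic, leadingCoeff, natDegree_cstar, coeff_cstar, hA.coeff_natDegree, star_one]

end Conjugation

theorem fst_star (x : DHq) : (star x).fst = star x.fst := by
  simp [star]

theorem snd_star (x : DHq) : (star x).snd = star x.snd := by
  simp [star]

noncomputable instance : StarRing DHq where
  star := star
  star_involutive x := by ext1 <;> simp [fst_star, snd_star]
  star_mul x y := by ext1 <;> simp [fst_star, snd_star, add_comm]
  star_add x y := by ext1 <;> simp [fst_star, snd_star]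

theorem qPoly_commute (f : ℝ[X]) (A : Hq[X]) : Commute (qPoly f) A :=
  let := Polynomial.algebra ℝ Hq
  Algebra.commutes f A

theorem qPoly_mul (f g : ℝ[X]) : qPoly (f * g) = qPoly f * qPoly g :=
  Polynomial.map_mul _

theorem qPoly_injective : Function.Injective qPoly :=
  map_injective _ (algebraMap ℝ Hq).injective

theorem qPoly_ne_zero {f : ℝ[X]} (hf : f ≠ 0) : qPoly f ≠ 0 :=
  (map_ne_zero_iff (mapRingHom (algebraMap ℝ Hq)) qPoly_injective).2 hf

theorem dPoly_eq_map (f : ℝ[X]) : dPoly f = f.map (algebraMap ℝ DHq) := by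
  rw [dPoly, dhQ, qPoly, Polynomial.map_map]
  rfl

theorem dPoly_commute (f : ℝ[X]) (A : DHq[X]) : Commute (dPoly f) A := by
  let := Polynomial.algebra ℝ DHq
  rw [dPoly_eq_map]
  exact Algebra.commutes f A

theorem dPoly_one : dPoly 1 = 1 := by
  rw [dPoly_eq_map, Polynomial.map_one]

theorem dPoly_mul (f g : ℝ[X]) : dPoly (f * g) = dPoly f * dPoly g := by
  simp only [dPoly_eq_map, Polynomial.map_mul]

theorem dPoly_injective : Function.Injective dPoly := fun f g h =>
  map_injective _ (algebraMap ℝ DHq).injective (by rwa [dPoly_eq_map, dPoly_eq_map] at h)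

theorem cstar_mul_self_of_mul_cstar_self {P : Hq[X]} {f : ℝ[X]}
    (h : P * cstar P = qPoly f) : cstar P * P = qPoly f := by
  rcases eq_or_ne P 0 with rfl | hP
  · simpa using h
  · apply mul_left_cancel₀ hP
    rw [← mul_assoc, h, (qPoly_commute f P).eq]

section Parts

variable (P D P' D' : Hq[X])

theorem coeff_mp (n : ℕ) : (mp P D).coeff n = inl (P.coeff n) + inr (D.coeff n) := by
  ext1 <;> simp [mp, dhQ]

theorem mp_add : mp P D + mp P' D' = mp (P + P') (D + D') := by
  simp only [mp, dhQ, Polynomial.map_add]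
  noncomm_ring

theorem mp_mul : mp P D * mp P' D' = mp (P * P') (P * D' + D * P') := by
  ext1 n
  ext1 <;> simp [coeff_mp, coeff_mul, fst_sum, snd_sum, Finset.sum_add_distrib]

theorem cstar_mp : cstar (mp P D) = mp (cstar P) (cstar D) := by
  ext1 n
  ext1 <;> simp [coeff_cstar, coeff_mp, fst_star, snd_star]

theorem primal_mp : primal (mp P D) = P := by
  ext1 n
  simp [primal, coeff_mp]

theorem dPoly_eq_mp (f : ℝ[X]) : dPoly f = mp (qPoly f) 0 := by
  simp [dPoly, mp, dhQ]

variable {P D P' D'}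

theorem mp_inj : mp P D = mp P' D' ↔ P = P' ∧ D = D' := by
  refine ⟨fun h => ⟨?_, ?_⟩, by rintro ⟨rfl, rfl⟩; rfl⟩
  · simpa only [primal_mp] using congrArg primal h
  · ext1 n
    simpa [coeff_mp] using congrArg (fun A : DHq[X] => (A.coeff n).snd) h

theorem exists_eq_mp (A : DHq[X]) : ∃ P D, A = mp P D := by
  induction A using Polynomial.induction_on' with
  | add A B hA hB =>
    obtain ⟨P, D, rfl⟩ := hA
    obtain ⟨P', D', rfl⟩ := hB
    exact ⟨_, _, mp_add P D P' D'⟩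
  | monomial n a =>
    refine ⟨monomial n a.fst, monomial n a.snd, ?_⟩
    ext1 k
    ext1 <;> simp [coeff_mp, coeff_monomial, apply_ite fst, apply_ite snd]

end Parts

/-- `HasNorm A f` says that the norm polynomial `ν(A) = A·A*` is the real polynomial `f`; unlike in
`IsMotion`, the norm is named and may be zero. -/
def HasNorm (A : DHq[X]) (f : ℝ[X]) : Prop := A * cstar A = dPoly f

namespace HasNorm

variable {A B : DHq[X]} {P D : Hq[X]} {c f g : ℝ[X]}

theorem unique (hf : HasNorm A f) (hg : HasNorm A g) : f = g :=
  dPoly_injective (hf.symm.trans hg)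

theorem one : HasNorm 1 1 := by
  rw [HasNorm, cstar_one, mul_one, dPoly_one]

theorem mul (hA : HasNorm A f) (hB : HasNorm B g) : HasNorm (A * B) (f * g) :=
  calc A * B * cstar (A * B)
    _ = A * (B * cstar B) * cstar A := by rw [cstar_mul]; noncomm_ring
    _ = dPoly (f * g) := by
      rw [hB, (dPoly_commute g A).symm.eq, mul_assoc, hA, ← dPoly_mul, mul_comm]

theorem list_prod {ι : Type*} {l : List ι} {A : ι → DHq[X]} {f : ι → ℝ[X]}
    (h : ∀ i ∈ l, HasNorm (A i) (f i)) : HasNorm (l.map A).prod (l.map f).prod := by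
  induction l with
  | nil => exact one
  | cons i l ih =>
    rw [List.forall_mem_cons] at h
    simpa only [List.map_cons, List.prod_cons] using h.1.mul (ih h.2)

theorem list_prod_const {ι : Type*} {l : List ι} {A : ι → DHq[X]}
    (h : ∀ i ∈ l, HasNorm (A i) f) : HasNorm (l.map A).prod (f ^ l.length) := by
  simpa only [List.map_const', List.prod_replicate] using list_prod h

theorem monic (h : HasNorm A f) (hA : A.Monic) : f.Monic := by
  refine monic_of_injective (algebraMap ℝ DHq).injective ?_
  rw [← dPoly_eq_map, ← h]
  exact hA.mul (monic_cstar hA)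

theorem natDegree_eq (h : HasNorm A f) (hA : A.Monic) : f.natDegree = 2 * A.natDegree := by
  rw [← natDegree_map_eq_of_injective (algebraMap ℝ DHq).injective f, ← dPoly_eq_map, ← h,
    hA.natDegree_mul (monic_cstar hA), natDegree_cstar, two_mul]

theorem primal_mul_cstar (h : HasNorm (mp P D) f) : P * cstar P = qPoly f := by
  rw [HasNorm, cstar_mp, mp_mul, dPoly_eq_mp] at h
  exact (mp_inj.1 h).1

theorem eq_sq (h : HasNorm (mp (qPoly c) D) f) : f = c ^ 2 := by
  have hc : cstar (qPoly c) = qPoly c := by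
    ext1 n
    simp [coeff_cstar, qPoly]
  apply qPoly_injective
  rw [← h.primal_mul_cstar, hc, sq, qPoly_mul]

end HasNorm

theorem rDvdQ_mul_cstar_of_eq_mul {c : ℝ[X]} {D : Hq[X]} {A B : DHq[X]} (hc : c ≠ 0)
    (hB : HasNorm B c) (hAB : mp (qPoly c) D = A * B) : RDvdQ c (D * cstar D) := by
  obtain ⟨Q, T, rfl⟩ := exists_eq_mp A
  obtain ⟨R, S, rfl⟩ := exists_eq_mp B
  have hR : R * cstar R = qPoly c := hB.primal_mul_cstar
  have hR' : cstar R * R = qPoly c := cstar_mul_self_of_mul_cstar_self hR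
  have hMB : mp (qPoly c) D * cstar (mp R S) = mp Q T * dPoly c := by
    rw [hAB, mul_assoc, hB]
  have hdual : qPoly c * cstar S + D * cstar R = T * qPoly c := by
    rw [cstar_mp, dPoly_eq_mp, mp_mul, mp_mul, mul_zero, zero_add] at hMB
    exact (mp_inj.1 hMB).2
  have hDR : D * cstar R = (T - cstar S) * qPoly c := by
    rw [sub_mul, ← hdual, (qPoly_commute c _).eq, add_sub_cancel_left]
  have hD : D = (T - cstar S) * R := by
    apply mul_right_cancel₀ (qPoly_ne_zero hc)
    calc D * qPoly c
      _ = (T - cstar S) * qPoly c * R := by rw [← hR', ← mul_assoc, hDR, hR']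
      _ = (T - cstar S) * R * qPoly c := by rw [mul_assoc, (qPoly_commute c R).eq, mul_assoc]
  refine ⟨(T - cstar S) * cstar (T - cstar S), ?_⟩
  calc D * cstar D
    _ = (T - cstar S) * (R * cstar R) * cstar (T - cstar S) := by
      rw [hD, cstar_mul]; noncomm_ring
    _ = qPoly c * ((T - cstar S) * cstar (T - cstar S)) := by
      rw [hR, (qPoly_commute c _).symm.eq, mul_assoc]

theorem HasLinFact.monic {M : DHq[X]} (h : HasLinFact M) : M.Monic := by
  obtain ⟨L, -, rfl⟩ := h
  refine List.prod_induction Monic (fun _ _ => Monic.mul) monic_one ?_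
  simpa only [List.forall_mem_map] using fun h _ => monic_X_sub_C h

theorem HasLinFact.exists_hasNorm {M : DHq[X]} (h : HasLinFact M) : ∃ f, HasNorm M f := by
  obtain ⟨L, hL, rfl⟩ := h
  choose! f _ hf using hL
  exact ⟨_, HasNorm.list_prod hf⟩

theorem hasNorm_X_sub_C_of_mem {N : ℝ[X]} {L : List DHq} {n : ℕ} (hNmon : N.Monic)
    (hN2 : N.natDegree = 2) (hNirr : Irreducible N) (hL : ∀ h ∈ L, IsMotion (X - C h))
    (hprod : HasNorm (L.map fun h => X - C h).prod (N ^ n)) : ∀ h ∈ L, HasNorm (X - C h) N := by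
  choose! f _ hf using hL
  intro h hh
  have hnorm : HasNorm (X - C h) (f h) := hf h hh
  have hdvd : f h ∣ N ^ n :=
    hprod.unique (HasNorm.list_prod hf) ▸ List.dvd_prod (List.mem_map_of_mem hh)
  obtain ⟨j, hj⟩ := exists_eq_pow_of_dvd_pow hNmon hNirr.prime (hnorm.monic (monic_X_sub_C h)) hdvd
  have hdeg : j * 2 = 2 := by
    rw [← hN2, ← hNmon.natDegree_pow, ← hj, hnorm.natDegree_eq (monic_X_sub_C h),
      natDegree_X_sub_C, hN2]
  rwa [hj, show j = 1 by omega, pow_one] at hnorm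

theorem rDvdQ_pow_mul_cstar_of_hasLinFact {N : ℝ[X]} {k : ℕ} {D : Hq[X]} (hNmon : N.Monic)
    (hN2 : N.natDegree = 2) (hNirr : Irreducible N)
    (hfact : HasLinFact (mp (qPoly (N ^ k)) D)) : RDvdQ (N ^ k) (D * cstar D) := by
  obtain ⟨f, hM⟩ := hfact.exists_hasNorm
  rw [hM.eq_sq, ← pow_mul] at hM
  obtain ⟨L, hL, hprod⟩ := hfact
  rw [hprod] at hM
  have hfactor : ∀ h ∈ L, HasNorm (X - C h) N := hasNorm_X_sub_C_of_mem hNmon hN2 hNirr hL hM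
  have hlen : L.length = k * 2 :=
    pow_injective_of_not_isUnit hNirr.not_isUnit hNirr.ne_zero
      ((HasNorm.list_prod_const hfactor).unique hM)
  have hright : HasNorm ((L.drop k).map fun h => X - C h).prod (N ^ k) := by
    have hdrop : (L.drop k).length = k := by
      rw [List.length_drop]
      omega
    simpa only [hdrop] using HasNorm.list_prod_const (l := L.drop k)
      fun h hh => hfactor h (List.mem_of_mem_drop hh)
  refine rDvdQ_mul_cstar_of_eq_mul (pow_ne_zero k hNirr.ne_zero) hright
    (A := ((L.take k).map fun h => X - C h).prod) ?_
  rw [hprod, List.map_take, List.map_drop, List.prod_take_mul_prod_drop]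

theorem translational_primary_c_divides_norm_general {n : ℕ} {c N : ℝ[X]} {D : Hq[X]}
    (hNmon : N.Monic) (hN2 : N.natDegree = 2) (hNirr : Irreducible N) (hcN : c ^ 2 = N ^ n)
    (hfact : HasLinFact (mp (qPoly c) D)) : RDvdQ c (D * cstar D) := by
  have hprimal : (primal (mp (qPoly c) D)).Monic := hfact.monic.map _
  rw [primal_mp] at hprimal
  have hc : c.Monic := monic_of_injective (algebraMap ℝ Hq).injective hprimal
  obtain ⟨k, rfl⟩ :=
    exists_eq_pow_of_dvd_pow hNmon hNirr.prime hc (hcN ▸ dvd_pow_self c two_ne_zero)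
  exact rDvdQ_pow_mul_cstar_of_hasLinFact hNmon hN2 hNirr hfact

/-- If a bounded monic reduced translational motion polynomial of primary norm admits a
linear factorization, then `c` divides `D·D*`. -/
theorem translational_primary_c_divides_norm
    (n : ℕ) (c : ℝ[X]) (D : Hq[X]) (N : ℝ[X]) (M : DHq[X])
    (hM : M = mp (qPoly c) D)
    (hmonic : M.Monic) (hmotion : IsMotion M)
    (hred : ReducedD M) (hbdd : BoundedD M)
    (hdeg : M.natDegree = n)
    (hNmon : N.Monic) (hN2 : N.natDegree = 2) (hNirr : Irreducible N)
    (hcN : c ^ 2 = N ^ n)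
    (hnorm : M * cstar M = dPoly (c ^ 2))
    (hfact : HasLinFact M) :
    RDvdQ c (D * cstar D) := by
  exact translational_primary_c_divides_norm_general hNmon hN2 hNirr hcN (hM ▸ hfact)
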